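/- Let d ≥ 2 and let B be the Minkowski bilinear form on ℝ^{d+1}. Let e, f ∈ ℝ^{d+1} be linearly independent with B(e,e) = 1, B(f,f) = 1 and |B(e,f)| = 1. Then there exists a nonzero vector u ∈ ℝ^{d+1} with B(u,u) = 0, B(u,e) = 0 and B(u,f) = 0, and there is no vector x with B(x,x) < 0, B(x,e) = 0 and B(x,f) = 0. -/

import Mathlib

/-- The Minkowski bilinear form of signature `(d,1)` on `ℝ^{d+1}`:
`B(x,y) = (∑_{i=0}^{d-1} x i * y i) - x d * y d`. -/
def minkowskiForm (d : ℕ) (x y : Fin (d + 1) → ℝ) : ℝ :=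
  (∑ i : Fin d, x i.castSucc * y i.castSucc) - x (Fin.last d) * y (Fin.last d)

theorem mink_comm (d : ℕ) (x y : Fin (d + 1) → ℝ) :
    minkowskiForm d x y = minkowskiForm d y x := by
  simp only [minkowskiForm, mul_comm]

theorem mink_sub_smul (d : ℕ) (c : ℝ) (x y z : Fin (d + 1) → ℝ) :
    minkowskiForm d (x - c • y) z = minkowskiForm d x z - c * minkowskiForm d y z := by
  simp only [minkowskiForm, Pi.sub_apply, Pi.smul_apply, smul_eq_mul, sub_mul,
    Finset.sum_sub_distrib, mul_sub, Finset.mul_sum, mul_assoc]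
  ring

theorem mink_aux (d : ℕ) (x u : Fin (d + 1) → ℝ) (hx : minkowskiForm d x x < 0)
    (hu : minkowskiForm d u u = 0) (hxu : minkowskiForm d x u = 0) : u = 0 := by
  unfold minkowskiForm at *
  have cs := Finset.sum_mul_sq_le_sq_mul_sq Finset.univ
    (fun i : Fin d => x i.castSucc) (fun i : Fin d => u i.castSucc)
  simp only [← pow_two] at *
  have h1 : u (Fin.last d) ^ 2 = 0 := by
    by_contra hne
    have hpos : 0 < u (Fin.last d) ^ 2 := lt_of_le_of_ne (sq_nonneg _) (Ne.symm hne)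
    rw [sub_eq_zero.mp hu, sub_eq_zero.mp hxu] at cs
    nlinarith
  have h2 : ∑ i : Fin d, u i.castSucc ^ 2 = 0 := by linarith
  rw [Finset.sum_eq_zero_iff_of_nonneg (fun i _ => sq_nonneg _)] at h2
  funext i
  refine Fin.lastCases ?_ (fun j => ?_) i
  · exact pow_eq_zero_iff (two_ne_zero) |>.mp h1
  · exact pow_eq_zero_iff (two_ne_zero) |>.mp (h2 j (Finset.mem_univ _))

/-- Parallel hyperplanes: if `|B(e,f)| = 1` then `e` and `f` have a common orthogonal
light-like vector, but no common orthogonal time-like vector. -/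
theorem hyperplanes_parallel (d : ℕ) (hd : 2 ≤ d)
    (e f : Fin (d + 1) → ℝ) (hef : LinearIndependent ℝ ![e, f])
    (he : minkowskiForm d e e = 1) (hf : minkowskiForm d f f = 1)
    (hefval : |minkowskiForm d e f| = 1) :
    (∃ u : Fin (d + 1) → ℝ, u ≠ 0 ∧ minkowskiForm d u u = 0 ∧
      minkowskiForm d u e = 0 ∧ minkowskiForm d u f = 0) ∧
    ¬ ∃ x : Fin (d + 1) → ℝ, minkowskiForm d x x < 0 ∧
      minkowskiForm d x e = 0 ∧ minkowskiForm d x f = 0 := by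
  have hc : minkowskiForm d e f * minkowskiForm d e f = 1 := by
    rw [← abs_mul_abs_self, hefval, one_mul]
  obtain ⟨c, hcdef⟩ : ∃ c, c = minkowskiForm d e f := ⟨_, rfl⟩
  rw [← hcdef] at hc
  have hue : minkowskiForm d (e - c • f) e = 0 := by
    rw [mink_sub_smul, mink_comm d f e, he, ← hcdef, hc, sub_self]
  have huf : minkowskiForm d (e - c • f) f = 0 := by
    rw [mink_sub_smul, hf, ← hcdef, mul_one, sub_self]
  have huu : minkowskiForm d (e - c • f) (e - c • f) = 0 := by
    rw [mink_sub_smul, mink_comm d e, mink_comm d f, hue, huf, mul_zero, sub_self]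
  have hne : e - c • f ≠ 0 := by
    intro h
    have := LinearIndependent.pair_iff.mp hef 1 (-c) (by rw [one_smul, neg_smul, ← sub_eq_add_neg, h])
    exact one_ne_zero this.1
  refine ⟨⟨_, hne, huu, hue, huf⟩, ?_⟩
  rintro ⟨x, hx, hxe, hxf⟩
  refine hne (mink_aux d x _ hx huu ?_)
  rw [mink_comm, mink_sub_smul, mink_comm d e, mink_comm d f, hxe, hxf, mul_zero, sub_self]
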